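/- Fix finite sets S (states) and 𝒜 (actions), a horizon H ∈ ℕ, transition kernels {P_h}_{h∈[H]} and reward functions r_h : S × 𝒜 → ℝ. Let π* and π be policies, let Q_h : S × 𝒜 → ℝ (h ∈ [H]) be arbitrary functions, define V_{H+1} ≡ 0 and V_h(s) = Σ_{a} π_h(a|s)·Q_h(s,a) for h ∈ [H], and define the model prediction error ι_h(s,a) = r_h(s,a) + Σ_{s'} P_h(s'|s,a)·V_{h+1}(s') − Q_h(s,a). Then for every initial state s₁ ∈ S, V^{π*}_1(s₁) − V_1(s₁) = Σ_{h=1}^{H} E_{π*}[ Σ_{a} Q_h(s_h,a)·(π*_h(a|s_h) − π_h(a|s_h)) | s_1 = s₁ ] + Σ_{h=1}^{H} E_{π*}[ ι_h(s_h, a_h) | s_1 = s₁ ]. -/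

import Mathlib

/-!
The identity telescopes along the trajectory of `π*`. Let `D k` be the expectation of
`V^{π*}_{k+1} - V_{k+1}` under the visitation distribution of `s_{k+1}`. The Bellman recursion for
`V^{π*}` and the definitions of `V` and `ι` give, pointwise in the state,
`V^{π*}_h - V_h = ∑ₐ Q_h (π*_h - π_h) + ∑ₐ π*_h ι_h + P_h^{π*} (V^{π*}_{h+1} - V_{h+1})`
(`value_gap_step`). Integrating the last term against the law of `s_h` gives `D h`
(`sum_visit_succ`), so `D k - D (k + 1)` is the summand of index `h = k + 1` on the right-hand
side, while `D 0` is the left-hand side and `D H = 0`.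
-/

/-- `visit P π s₁ n` is the visitation distribution of `s_{n+1}` under
policy `π` started at `s₁`, i.e. `μ_{n+1}^π(·|s₁)`: the point mass at `s₁`
for `n = 0`, then pushed forward one step at a time by the one-step kernels
`P_h^π(s'|s) = ∑ₐ P_h(s'|s,a) π_h(a|s)`. -/
noncomputable def visit {S 𝒜 : Type*} [Fintype S] [Fintype 𝒜] [DecidableEq S]
    (P : ℕ → S → 𝒜 → S → ℝ) (π : ℕ → S → 𝒜 → ℝ) (s₁ : S) : ℕ → S → ℝ
  | 0 => fun s => if s = s₁ then 1 else 0
  | n + 1 => fun s' =>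
      ∑ s, visit P π s₁ n s * ∑ a, P (n + 1) s a s' * π (n + 1) s a

/-- `Vpol P r π n h s` is the value function `V^π_h(s)` computed with `n`
remaining steps: `V^π_{H+1} ≡ 0` corresponds to `n = 0`, and
`V^π_h(s) = ∑ₐ π_h(a|s) (r_h(s,a) + ∑_{s'} P_h(s'|s,a) V^π_{h+1}(s'))`
corresponds to `n = H + 1 - h`. -/
noncomputable def Vpol {S 𝒜 : Type*} [Fintype S] [Fintype 𝒜]
    (P : ℕ → S → 𝒜 → S → ℝ) (r : ℕ → S → 𝒜 → ℝ) (π : ℕ → S → 𝒜 → ℝ) :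
    ℕ → ℕ → S → ℝ
  | 0, _, _ => 0
  | n + 1, h, s =>
      ∑ a, π h s a * (r h s a + ∑ s', P h s a s' * Vpol P r π n (h + 1) s')

/-- Duality form of the forward recursion: the expectation of `f (s_{n+2})` is the expectation at
`s_{n+1}` of the one-step conditional expectation of `f`. -/
theorem sum_visit_succ {S 𝒜 : Type*} [Fintype S] [Fintype 𝒜] [DecidableEq S]
    (P : ℕ → S → 𝒜 → S → ℝ) (π : ℕ → S → 𝒜 → ℝ) (s₁ : S) (n : ℕ) (f : S → ℝ) :
    ∑ s', visit P π s₁ (n + 1) s' * f s' =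
      ∑ s, visit P π s₁ n s * ∑ a, π (n + 1) s a * ∑ s', P (n + 1) s a s' * f s' := by
  simp only [visit, Finset.sum_mul, Finset.mul_sum]
  rw [Finset.sum_comm]
  refine Finset.sum_congr rfl fun s _ => ?_
  rw [Finset.sum_comm]
  refine Finset.sum_congr rfl fun a _ => Finset.sum_congr rfl fun s' _ => ?_
  ring

/-- One-step expansion of the gap between `V^{π*}_h` and `V_h` at a fixed state. With the state
fixed, `p`, `q` are the action probabilities under `π*`, `π`, and `W'`, `V'` are the two value
functions at the next step. -/
theorem value_gap_step {S 𝒜 : Type*} [Fintype S] [Fintype 𝒜]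
    (p q r Q ι : 𝒜 → ℝ) (P : 𝒜 → S → ℝ) (W' V' : S → ℝ)
    (hι : ∀ a, ι a = r a + (∑ s', P a s' * V' s') - Q a) :
    (∑ a, p a * (r a + ∑ s', P a s' * W' s')) - ∑ a, q a * Q a =
      (∑ a, Q a * (p a - q a)) + (∑ a, p a * ι a) +
        ∑ a, p a * ∑ s', P a s' * (W' s' - V' s') := by
  simp only [← Finset.sum_add_distrib, ← Finset.sum_sub_distrib]
  refine Finset.sum_congr rfl fun a _ => ?_
  simp only [hι a, mul_sub, Finset.sum_sub_distrib]
  ring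

/-- Regret decomposition, optimal-policy part (part of Lemma 4.2 of
Cai et al., as used in the paper's dynamic regret decomposition):
`V^{π*}_1(s₁) − V_1(s₁)` equals the expected performance difference plus
the expected model prediction error, both under the optimal policy. -/
theorem value_difference_decomposition_optimal
    {S 𝒜 : Type*} [Fintype S] [Fintype 𝒜] [Nonempty S] [Nonempty 𝒜]
    [DecidableEq S]
    (H : ℕ)
    (P : ℕ → S → 𝒜 → S → ℝ)
    (hP_nonneg : ∀ h ∈ Finset.Icc 1 H, ∀ s a s', 0 ≤ P h s a s')
    (hP_sum : ∀ h ∈ Finset.Icc 1 H, ∀ s a, ∑ s', P h s a s' = 1)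
    (r : ℕ → S → 𝒜 → ℝ)
    (πs π : ℕ → S → 𝒜 → ℝ)
    (hπs_nonneg : ∀ h ∈ Finset.Icc 1 H, ∀ s a, 0 ≤ πs h s a)
    (hπs_sum : ∀ h ∈ Finset.Icc 1 H, ∀ s, ∑ a, πs h s a = 1)
    (hπ_nonneg : ∀ h ∈ Finset.Icc 1 H, ∀ s a, 0 ≤ π h s a)
    (hπ_sum : ∀ h ∈ Finset.Icc 1 H, ∀ s, ∑ a, π h s a = 1)
    (Q : ℕ → S → 𝒜 → ℝ)
    (V : ℕ → S → ℝ)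
    (hV_end : ∀ s, V (H + 1) s = 0)
    (hV : ∀ h ∈ Finset.Icc 1 H, ∀ s, V h s = ∑ a, π h s a * Q h s a)
    (ι : ℕ → S → 𝒜 → ℝ)
    (hι : ∀ h ∈ Finset.Icc 1 H, ∀ s a,
      ι h s a = r h s a + (∑ s', P h s a s' * V (h + 1) s') - Q h s a)
    (s₁ : S) :
    Vpol P r πs H 1 s₁ - V 1 s₁ =
      (∑ h ∈ Finset.Icc 1 H, ∑ s, visit P πs s₁ (h - 1) s *
          ∑ a, Q h s a * (πs h s a - π h s a)) +
        ∑ h ∈ Finset.Icc 1 H, ∑ s, visit P πs s₁ (h - 1) s *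
          ∑ a, πs h s a * ι h s a := by
  have hstep : ∀ k ∈ Finset.range H,
      ((∑ s, visit P πs s₁ k s * ∑ a, Q (k + 1) s a * (πs (k + 1) s a - π (k + 1) s a)) +
        ∑ s, visit P πs s₁ k s * ∑ a, πs (k + 1) s a * ι (k + 1) s a) =
      (∑ s, visit P πs s₁ k s * (Vpol P r πs (H - k) (k + 1) s - V (k + 1) s)) -
        ∑ s, visit P πs s₁ (k + 1) s *
          (Vpol P r πs (H - (k + 1)) (k + 1 + 1) s - V (k + 1 + 1) s) := by
    intro k hk
    have hkH : k < H := Finset.mem_range.mp hk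
    have hmem : k + 1 ∈ Finset.Icc 1 H := Finset.mem_Icc.mpr ⟨by omega, by omega⟩
    have hsub : H - k = (H - (k + 1)) + 1 := by omega
    rw [sum_visit_succ, hsub, ← Finset.sum_add_distrib, ← Finset.sum_sub_distrib]
    refine Finset.sum_congr rfl fun s _ => ?_
    rw [Vpol, hV _ hmem s, value_gap_step (πs (k + 1) s) (π (k + 1) s) (r (k + 1) s)
      (Q (k + 1) s) (ι (k + 1) s) (P (k + 1) s) _ (V (k + 1 + 1)) (hι _ hmem s)]
    ring
  have hreindex : ∀ F : ℕ → ℝ, ∑ h ∈ Finset.Icc 1 H, F h = ∑ k ∈ Finset.range H, F (k + 1) := by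
    intro F
    rw [Finset.range_eq_Ico, Finset.sum_Ico_add' F 0 H 1]
    rfl
  rw [← Finset.sum_add_distrib, hreindex]
  simp only [Nat.add_sub_cancel]
  rw [Finset.sum_congr rfl hstep, Finset.sum_range_sub'
    (fun k => ∑ s, visit P πs s₁ k s * (Vpol P r πs (H - k) (k + 1) s - V (k + 1) s))]
  simp [visit, Vpol, hV_end]
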